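/- Fix a prime p and natural numbers m ≤ n, a ≤ n, u > 0. With the equivalence relation ≡ᵘₐ on m-element subsets of {1,...,n} defined by f₁ ≡ f₂ iff f₁ ∩ {1,...,n-a} = f₂ ∩ {1,...,n-a} and f₁(j) ≡ f₂(j) (mod u) for all j, suppose u·p^(v_p(b!)+1) divides a, where b = |f ∩ ({1,...,n} \ {1,...,n-a})| for elements f of an equivalence class δ not contained in D_{m,n-a}. Then the cardinality of δ is divisible by p. -/

import Mathlib

/-- `D_{m,n}`: the `m`-element subsets of `{1,...,n}`. -/
def Dmn (m n : ℕ) : Finset (Finset ℕ) := (Finset.Icc 1 n).powersetCard m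

/-- The equivalence relation `≡ᵘₐ`: `f₁ ≡ f₂` iff they have the same intersection with
`{1,...,n-a}` and their `j`-th elements (in increasing order) are congruent mod `u`. -/
def EqvRel (n a u : ℕ) (f₁ f₂ : Finset ℕ) : Prop :=
  f₁ ∩ Finset.Icc 1 (n - a) = f₂ ∩ Finset.Icc 1 (n - a) ∧
  List.Forall₂ (fun x y => x ≡ y [MOD u]) (f₁.sort (· ≤ ·)) (f₂.sort (· ≤ ·))

open Finset in
theorem Finset.sort_union_of_forall_rel {α : Type*} [DecidableEq α] (r : α → α → Prop)
    [DecidableRel r] [IsTrans α r] [Std.Antisymm r] [Std.Total r] {s t : Finset α}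
    (hst : Disjoint s t) (h : ∀ x ∈ s, ∀ y ∈ t, r x y) :
    (s ∪ t).sort r = s.sort r ++ t.sort r := by
  have hnodup : (s.sort r ++ t.sort r).Nodup := by
    refine List.nodup_append'.2 ⟨sort_nodup _ _, sort_nodup _ _, fun x hx hx' => ?_⟩
    exact disjoint_left.1 hst ((mem_sort r).1 hx) ((mem_sort r).1 hx')
  have hpw : (s.sort r ++ t.sort r).Pairwise r :=
    List.pairwise_append.2 ⟨pairwise_sort _ _, pairwise_sort _ _,
      fun x hx y hy => h x ((mem_sort r).1 hx) y ((mem_sort r).1 hy)⟩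
  rw [← (List.toFinset_sort r hnodup).2 hpw]
  simp

theorem Finset.sort_ge_eq_reverse {α : Type*} [LinearOrder α] (s : Finset α) :
    s.sort (· ≥ ·) = (s.sort (· ≤ ·)).reverse := by
  refine List.Perm.eq_of_pairwise' (r := (· ≥ ·)) (pairwise_sort _ _) ?_ ?_
  · exact List.pairwise_reverse.2 (pairwise_sort s (· ≤ ·))
  · exact ((sort_perm_toList s _).trans (sort_perm_toList s _).symm).trans
      (List.reverse_perm _).symm

/-- A product of `b` consecutive integers one of which is `A` is divisible by `A`; comparing
`p`-adic valuations with `b!` leaves a factor `p` in the binomial coefficient. -/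
theorem Nat.Prime.dvd_choose_of_pow_dvd {p A b k : ℕ} (hp : p.Prime) (hk : k < b)
    (hA : p ^ (padicValNat p b.factorial + 1) ∣ A) : p ∣ (A + k).choose b := by
  have := Fact.mk hp
  have hdvd : A ∣ b.factorial * (A + k).choose b := by
    rw [← Nat.descFactorial_eq_factorial_mul_choose, Nat.descFactorial_eq_prod_range]
    simpa using Finset.dvd_prod_of_mem (fun i => A + k - i) (Finset.mem_range.2 hk)
  by_cases h0 : (A + k).choose b = 0
  · simp [h0]
  have h := (padicValNat_dvd_iff_le (mul_ne_zero b.factorial_ne_zero h0)).1 (hA.trans hdvd)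
  rw [padicValNat.mul b.factorial_ne_zero h0] at h
  exact dvd_of_one_le_padicValNat (by omega)

open Classical in
/-- The subsets of `{s, ..., s + N - 1}` whose elements, listed in decreasing order, are congruent
modulo `u` to the entries of `L` translated by `s`. -/
noncomputable def residueSets (u s : ℕ) (L : List ℕ) (N : ℕ) : Finset (Finset ℕ) :=
  (Finset.Ico s (s + N)).powerset.filter
    fun g => List.Forall₂ (fun x v => x ≡ s + v [MOD u]) (g.sort (· ≥ ·)) L

theorem mem_residueSets {u s : ℕ} {L : List ℕ} {N : ℕ} {g : Finset ℕ} :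
    g ∈ residueSets u s L N ↔ g ⊆ Finset.Ico s (s + N) ∧
      List.Forall₂ (fun x v => x ≡ s + v [MOD u]) (g.sort (· ≥ ·)) L := by
  simp [residueSets]

theorem card_residueSets_nil (u s N : ℕ) : (residueSets u s [] N).card = 1 := by
  refine Finset.card_eq_one.2 ⟨∅, ?_⟩
  ext g
  rw [mem_residueSets, List.forall₂_nil_right_iff, ← List.length_eq_zero_iff, Finset.length_sort,
    Finset.card_eq_zero, Finset.mem_singleton]
  exact ⟨fun h => h.2, fun h => ⟨by simp [h], h⟩⟩

theorem card_residueSets_cons_zero (u s c : ℕ) (L : List ℕ) :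
    (residueSets u s (c :: L) 0).card = 0 := by
  refine Finset.card_eq_zero.2 (Finset.eq_empty_of_forall_notMem fun g hg => ?_)
  rw [mem_residueSets] at hg
  obtain rfl : g = ∅ := by simpa using hg.1
  simpa using hg.2

theorem card_residueSets_cons_succ (u s c : ℕ) (L : List ℕ) (N : ℕ) :
    (residueSets u s (c :: L) (N + 1)).card =
      (residueSets u s (c :: L) N).card +
        if N ≡ c [MOD u] then (residueSets u s L N).card else 0 := by
  classical
  have hnot : ∀ {g : Finset ℕ}, g ⊆ Finset.Ico s (s + N) → s + N ∉ g :=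
    fun hg h => by simpa using hg h
  have hsort : ∀ {g : Finset ℕ}, g ⊆ Finset.Ico s (s + N) →
      (insert (s + N) g).sort (· ≥ ·) = (s + N) :: g.sort (· ≥ ·) := fun hg =>
    Finset.sort_insert _ (fun x hx => (Finset.mem_Ico.1 (hg hx)).2.le) (hnot hg)
  have hIco : Finset.Ico s (s + (N + 1)) = insert (s + N) (Finset.Ico s (s + N)) := by
    ext x; simp only [Finset.mem_insert, Finset.mem_Ico]; omega
  have hsplit : residueSets u s (c :: L) (N + 1) = residueSets u s (c :: L) N ∪
      if N ≡ c [MOD u] then (residueSets u s L N).image (insert (s + N)) else ∅ := by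
    ext g
    rw [Finset.mem_union, mem_residueSets, mem_residueSets, hIco]
    by_cases hmem : s + N ∈ g
    · obtain ⟨g, hg, rfl⟩ : ∃ g', s + N ∉ g' ∧ insert (s + N) g' = g :=
        ⟨g.erase (s + N), Finset.notMem_erase _ _, Finset.insert_erase hmem⟩
      have himage : insert (s + N) g ∈ (residueSets u s L N).image (insert (s + N)) ↔
          g ∈ residueSets u s L N := by
        refine ⟨fun h => ?_, Finset.mem_image_of_mem _⟩
        obtain ⟨g', hg', h⟩ := Finset.mem_image.1 h
        rwa [← Finset.erase_insert hg, ← h,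
          Finset.erase_insert (hnot (mem_residueSets.1 hg').1)]
      have hfalse : ¬ insert (s + N) g ⊆ Finset.Ico s (s + N) :=
        fun h => hnot h (Finset.mem_insert_self _ _)
      rw [Finset.insert_subset_insert_iff hg]
      simp only [hfalse, false_and, false_or]
      have hmod : s + N ≡ s + c [MOD u] ↔ N ≡ c [MOD u] :=
        ⟨Nat.ModEq.add_left_cancel' s, Nat.ModEq.add_left s⟩
      split_ifs with hc
      · rw [himage, mem_residueSets]
        refine and_congr_right fun hsub => ?_
        rw [hsort hsub, List.forall₂_cons, hmod]
        exact and_iff_right hc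
      · simp only [Finset.notMem_empty, iff_false, not_and]
        intro hsub
        rw [hsort hsub, List.forall₂_cons, hmod]
        exact fun h => hc h.1
    · have himage : g ∉
          if N ≡ c [MOD u] then (residueSets u s L N).image (insert (s + N)) else ∅ := by
        split_ifs
        · rintro h
          obtain ⟨g', -, rfl⟩ := Finset.mem_image.1 h
          exact hmem (Finset.mem_insert_self _ _)
        · simp
      rw [Finset.subset_insert_iff_of_notMem hmem]
      simp only [himage, or_false]
  rw [hsplit, Finset.card_union_of_disjoint]
  · congr 1
    split_ifs
    · refine Finset.card_image_of_injOn fun g hg g' hg' h => ?_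
      rw [← Finset.erase_insert (hnot (mem_residueSets.1 hg).1),
        ← Finset.erase_insert (hnot (mem_residueSets.1 hg').1)]
      exact congrArg (Finset.erase · (s + N)) h
    · simp
  · refine Finset.disjoint_left.2 fun g hg hg' => ?_
    split_ifs at hg'
    · obtain ⟨g', -, rfl⟩ := Finset.mem_image.1 hg'
      exact hnot (mem_residueSets.1 hg).1 (Finset.mem_insert_self _ _)
    · simp at hg'

theorem exists_card_residueSets_cons_eq_choose {u : ℕ} (hu : 0 < u) (s c : ℕ) (L : List ℕ) :
    ∃ k ≤ L.length, ∀ N, (residueSets u s (c :: L) N).card =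
      (N.count (· ≡ c [MOD u]) + k).choose (L.length + 1) := by
  induction L generalizing c with
  | nil =>
    refine ⟨0, le_rfl, fun N => ?_⟩
    induction N with
    | zero => simp [card_residueSets_cons_zero]
    | succ N ih =>
      rw [card_residueSets_cons_succ, ih, card_residueSets_nil, Nat.count_succ]
      simp
  | cons d L ihL =>
    obtain ⟨k, hk, hcard⟩ := ihL d
    refine ⟨k + if d % u < c % u then 1 else 0, ?_, fun N => ?_⟩
    · rw [List.length_cons]; split_ifs <;> omega
    induction N with
    | zero =>
      rw [card_residueSets_cons_zero, Nat.count_zero, Nat.choose_eq_zero_of_lt]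
      rw [List.length_cons]; split_ifs <;> omega
    | succ N ih =>
      rw [card_residueSets_cons_succ, ih, hcard, Nat.count_succ]
      by_cases hN : N ≡ c [MOD u]
      · have hN' : N % u = c % u := hN
        simp only [hN, if_true, Nat.count_modEq_card _ hu, hN', lt_irrefl, if_false,
          List.length_cons]
        rw [show N / u + 0 + 1 + (k + if d % u < c % u then 1 else 0) =
            (N / u + (if d % u < c % u then 1 else 0) + k) + 1 by omega, Nat.choose_succ_succ,
          show N / u + 0 + (k + if d % u < c % u then 1 else 0) =
            N / u + (if d % u < c % u then 1 else 0) + k by omega, add_comm]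
      · simp [hN]

theorem eqvRel_iff {n a u : ℕ} {f₁ f₂ : Finset ℕ} (h₁ : f₁ ⊆ Finset.Icc 1 n)
    (h₂ : f₂ ⊆ Finset.Icc 1 n) :
    EqvRel n a u f₁ f₂ ↔ f₁ ∩ Finset.Icc 1 (n - a) = f₂ ∩ Finset.Icc 1 (n - a) ∧
      List.Forall₂ (· ≡ · [MOD u]) ((f₁ \ Finset.Icc 1 (n - a)).sort (· ≥ ·))
        ((f₂ \ Finset.Icc 1 (n - a)).sort (· ≥ ·)) := by
  have hsort : ∀ {f : Finset ℕ}, f ⊆ Finset.Icc 1 n → f.sort (· ≥ ·) =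
      (f \ Finset.Icc 1 (n - a)).sort (· ≥ ·) ++ (f ∩ Finset.Icc 1 (n - a)).sort (· ≥ ·) := by
    intro f hf
    rw [← Finset.sort_union_of_forall_rel _ (Finset.disjoint_sdiff_inter _ _),
      Finset.sdiff_union_inter]
    intro x hx y hy
    have := hf (Finset.mem_sdiff.1 hx).1
    simp only [Finset.mem_sdiff, Finset.mem_inter, Finset.mem_Icc] at hx hy this
    omega
  refine and_congr_right fun hinter => ?_
  rw [← List.forall₂_reverse_iff, ← Finset.sort_ge_eq_reverse, ← Finset.sort_ge_eq_reverse,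
    hsort h₁, hsort h₂, hinter]
  refine ⟨fun h => ?_, fun h => List.rel_append h (List.forall₂_same.2 fun x _ => .refl x)⟩
  have hlen := h.length_eq
  have htake := List.forall₂_take_append _ _ _ h
  rw [List.length_append, List.length_append, Nat.add_right_cancel_iff] at hlen
  rwa [← hlen, List.take_left] at htake

theorem card_equivClass_eq_card_residueSets {m n a u : ℕ} (ha : a ≤ n) {f₀ : Finset ℕ}
    (hf₀ : f₀ ∈ Dmn m n) :
    (@Finset.filter _ (fun f => EqvRel n a u f f₀) (Classical.decPred _) (Dmn m n)).card =
      (residueSets u (n - a + 1)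
        (((f₀ \ Finset.Icc 1 (n - a)).sort (· ≥ ·)).map (· - (n - a + 1))) a).card := by
  classical
  obtain ⟨hsub₀, hcard₀⟩ := Finset.mem_powersetCard.1 hf₀
  have hmap : ∀ l : List ℕ, List.Forall₂ (fun x v => x ≡ n - a + 1 + v [MOD u]) l
      (((f₀ \ Finset.Icc 1 (n - a)).sort (· ≥ ·)).map (· - (n - a + 1))) ↔
      List.Forall₂ (· ≡ · [MOD u]) l ((f₀ \ Finset.Icc 1 (n - a)).sort (· ≥ ·)) := by
    intro l
    have hid : ((f₀ \ Finset.Icc 1 (n - a)).sort (· ≥ ·)).map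
        (fun x => n - a + 1 + (x - (n - a + 1))) = (f₀ \ Finset.Icc 1 (n - a)).sort (· ≥ ·) := by
      conv_rhs => rw [← List.map_id ((f₀ \ Finset.Icc 1 (n - a)).sort (· ≥ ·))]
      refine List.map_congr_left fun x hx => ?_
      have hx := (Finset.mem_sort _).1 hx
      have := hsub₀ (Finset.mem_sdiff.1 hx).1
      simp only [Finset.mem_sdiff, Finset.mem_Icc, id] at hx this ⊢
      omega
    rw [List.forall₂_map_right_iff]
    conv_rhs => rw [← hid, List.forall₂_map_right_iff]
  have hsdiff : ∀ {f : Finset ℕ}, f ⊆ Finset.Icc 1 n →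
      f \ Finset.Icc 1 (n - a) ⊆ Finset.Ico (n - a + 1) (n - a + 1 + a) := by
    intro f hf x hx
    have := hf (Finset.mem_sdiff.1 hx).1
    simp only [Finset.mem_sdiff, Finset.mem_Icc, Finset.mem_Ico] at hx this ⊢
    omega
  have hdisj : ∀ {g : Finset ℕ}, g ⊆ Finset.Ico (n - a + 1) (n - a + 1 + a) →
      Disjoint g (Finset.Icc 1 (n - a)) := by
    refine fun hg => Finset.disjoint_left.2 fun x hx hx' => ?_
    have := hg hx
    simp only [Finset.mem_Icc, Finset.mem_Ico] at hx' this
    omega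
  have hunion_inter : ∀ {g : Finset ℕ}, g ⊆ Finset.Ico (n - a + 1) (n - a + 1 + a) →
      (g ∪ f₀ ∩ Finset.Icc 1 (n - a)) ∩ Finset.Icc 1 (n - a) = f₀ ∩ Finset.Icc 1 (n - a) := by
    intro g hg
    rw [Finset.union_inter_distrib_right, Finset.disjoint_iff_inter_eq_empty.1 (hdisj hg),
      Finset.empty_union, Finset.inter_assoc, Finset.inter_self]
  have hunion_sdiff : ∀ {g : Finset ℕ}, g ⊆ Finset.Ico (n - a + 1) (n - a + 1 + a) →
      (g ∪ f₀ ∩ Finset.Icc 1 (n - a)) \ Finset.Icc 1 (n - a) = g := by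
    intro g hg
    rw [Finset.union_sdiff_distrib, Finset.sdiff_eq_self_of_disjoint (hdisj hg),
      Finset.sdiff_eq_empty_iff_subset.2 Finset.inter_subset_right, Finset.union_empty]
  refine Finset.card_nbij' (· \ Finset.Icc 1 (n - a)) (· ∪ f₀ ∩ Finset.Icc 1 (n - a))
    ?_ ?_ ?_ ?_
  · intro f hf
    obtain ⟨hf, hrel⟩ := Finset.mem_filter.1 hf
    have hsub := (Finset.mem_powersetCard.1 hf).1
    exact mem_residueSets.2 ⟨hsdiff hsub, (hmap _).2 ((eqvRel_iff hsub hsub₀).1 hrel).2⟩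
  · intro g hg
    obtain ⟨hg, hrel⟩ := mem_residueSets.1 hg
    rw [hmap] at hrel
    have hsub : g ∪ f₀ ∩ Finset.Icc 1 (n - a) ⊆ Finset.Icc 1 n := by
      refine Finset.union_subset (fun x hx => ?_) (Finset.inter_subset_left.trans hsub₀)
      have := hg hx
      simp only [Finset.mem_Icc, Finset.mem_Ico] at this ⊢
      omega
    refine Finset.mem_filter.2 ⟨Finset.mem_powersetCard.2 ⟨hsub, ?_⟩, ?_⟩
    · have hlen := hrel.length_eq
      rw [Finset.length_sort, Finset.length_sort] at hlen
      rw [Finset.card_union_of_disjoint ((hdisj hg).mono_right Finset.inter_subset_right), hlen,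
        Finset.card_sdiff_add_card_inter, hcard₀]
    · rw [eqvRel_iff hsub hsub₀, hunion_inter hg, hunion_sdiff hg]
      exact ⟨rfl, hrel⟩
  · intro f hf
    obtain ⟨hf, hrel⟩ := Finset.mem_filter.1 hf
    change f \ _ ∪ f₀ ∩ _ = f
    rw [← hrel.1, Finset.sdiff_union_inter]
  · intro g hg
    exact hunion_sdiff (mem_residueSets.1 hg).1

/-- (First collision lemma, divisibility part.) If `δ` is an equivalence class of `≡ᵘₐ` on
`D_{m,n}` not contained in `D_{m,n-a}`, `b` is the number of elements of a member of `δ`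
lying in `{1,...,n} \ {1,...,n-a}`, and `u · p^(v_p(b!)+1)` divides `a`, then `p` divides
the cardinality of `δ`. -/
theorem card_equiv_class_dvd (p m n a u : ℕ) (hp : p.Prime) (hm : m ≤ n) (ha : a ≤ n)
    (hu : 0 < u) (f₀ : Finset ℕ) (hf₀ : f₀ ∈ Dmn m n)
    (hnot : ¬ f₀ ⊆ Finset.Icc 1 (n - a))
    (b : ℕ) (hb : b = (f₀ \ Finset.Icc 1 (n - a)).card)
    (hdvd : u * p ^ (padicValNat p (Nat.factorial b) + 1) ∣ a) :
    p ∣ (@Finset.filter _ (fun f => EqvRel n a u f f₀) (Classical.decPred _) (Dmn m n)).card := by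
  rw [card_equivClass_eq_card_residueSets ha hf₀]
  obtain ⟨c, L, hL⟩ : ∃ c L, ((f₀ \ Finset.Icc 1 (n - a)).sort (· ≥ ·)).map (· - (n - a + 1)) =
      c :: L := by
    refine List.exists_cons_of_ne_nil fun h => hnot ?_
    rw [List.map_eq_nil_iff, ← List.length_eq_zero_iff, Finset.length_sort,
      Finset.card_eq_zero] at h
    exact Finset.sdiff_eq_empty_iff_subset.1 h
  have hlen : L.length + 1 = b := by
    rw [hb, ← List.length_cons (a := c), ← hL, List.length_map, Finset.length_sort]
  obtain ⟨k, hk, hcard⟩ := exists_card_residueSets_cons_eq_choose hu (n - a + 1) c L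
  obtain ⟨q, rfl⟩ := hdvd
  rw [hL, hcard, hlen, Nat.count_modEq_card _ hu, mul_assoc, Nat.mul_div_cancel_left _ hu,
    Nat.mul_mod_right, if_neg (Nat.not_lt_zero _), add_zero]
  exact hp.dvd_choose_of_pow_dvd (by omega) (dvd_mul_right _ _)
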